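/- (Weak hypergraph regularity lemma for 3-uniform hypergraphs.) For all t₀ ≥ 0 and ε > 0 there exist T₀ = T₀(t₀,ε) and n₀ = n₀(t₀,ε) such that for every 3-uniform hypergraph H=(V,E) on n ≥ n₀ vertices there exists a partition V = V₀ ∪ V₁ ∪ … ∪ V_t such that (i) t₀ ≤ t ≤ T₀, (ii) |V₁| = |V₂| = … = |V_t| and |V₀| ≤ εn, and (iii) for all but at most ε·C(t,3) sets {i₁,i₂,i₃} ∈ ([t] choose 3), the triple (V_{i₁}, V_{i₂}, V_{i₃}) is ε-regular. -/

import Mathlib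

open Finset

/-- The number of edges of `H` with exactly one vertex in each of `A₁`, `A₂`, `A₃`. -/
def eCross {V : Type} [DecidableEq V] (H : Finset (Finset V)) (A1 A2 A3 : Finset V) : ℕ :=
  (H.filter (fun e => (e ∩ A1).card = 1 ∧ (e ∩ A2).card = 1 ∧ (e ∩ A3).card = 1)).card

/-- The density of `H` with respect to the triple `(A₁, A₂, A₃)`. -/
noncomputable def triDensity {V : Type} [DecidableEq V] (H : Finset (Finset V))
    (A1 A2 A3 : Finset V) : ℝ :=
  (eCross H A1 A2 A3 : ℝ) / ((A1.card : ℝ) * (A2.card : ℝ) * (A3.card : ℝ))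

/-- The triple `(V₁, V₂, V₃)` is `(ε, d)`-regular in `H`. -/
def RegTriple {V : Type} [DecidableEq V] (H : Finset (Finset V)) (ε d : ℝ)
    (V1 V2 V3 : Finset V) : Prop :=
  ∀ A1 A2 A3 : Finset V, A1 ⊆ V1 → A2 ⊆ V2 → A3 ⊆ V3 →
    ε * V1.card ≤ A1.card → ε * V2.card ≤ A2.card → ε * V3.card ≤ A3.card →
    |triDensity H A1 A2 A3 - d| ≤ ε

/-- The triple `(V₁, V₂, V₃)` is `ε`-regular in `H`: it is `(ε, d)`-regular for some
`d ≥ 0`. -/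
def EpsRegTriple {V : Type} [DecidableEq V] (H : Finset (Finset V)) (ε : ℝ)
    (V1 V2 V3 : Finset V) : Prop :=
  ∃ d : ℝ, 0 ≤ d ∧ RegTriple H ε d V1 V2 V3

/-! The edge indicator of `H` on `V × V × V` is approximated by nonnegative step functions, each
depending only on the colours of the three vertices under some colouring of `V`. Cut the colour
classes into parts of equal size. On a triple of parts the step function has a constant value `d`,
and if the triple is irregular then some box in it has edge density more than `ε` away from `d`.
Replacing `d` by the density on all these boxes decreases the squared distance to the edge indicator
by a fixed proportion of `|V|³`, while the new number of colours is bounded in terms of the old one.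
As the squared distance starts at `|V|³` or less, this happens a bounded number of times. -/

open scoped Function

section Patch

variable {ι X β Y : Type*} {S : ι → Finset X} {a : ι → β} {u : X → β} {x : X}

open Classical in
/-- The function `u` overwritten by the constant `a i` on each set `S i`. Where the sets overlap,
one of the values is chosen. -/
noncomputable def patch (S : ι → Finset X) (a : ι → β) (u : X → β) (x : X) : β :=
  if h : ∃ i, x ∈ S i then a h.choose else u x

theorem patch_of_mem (hS : Pairwise (Disjoint on S)) {i : ι} (hx : x ∈ S i) :
    patch S a u x = a i := by
  have h : ∃ i, x ∈ S i := ⟨i, hx⟩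
  have hi : h.choose = i := hS.eq (not_disjoint_iff.2 ⟨x, h.choose_spec, hx⟩)
  rw [patch, dif_pos h, hi]

theorem patch_of_notMem (hx : ∀ i, x ∉ S i) : patch S a u x = u x :=
  dif_neg (not_exists.2 hx)

theorem patch_nonneg [Zero β] [LE β] (ha : ∀ i, 0 ≤ a i) (hu : ∀ x, 0 ≤ u x) (x : X) :
    0 ≤ patch S a u x := by
  unfold patch
  split_ifs
  exacts [ha _, hu x]

theorem factorsThrough_patch {g : X → Y} (hS : Pairwise (Disjoint on S)) (hu : u.FactorsThrough g)
    (hSg : ∀ i, (fun x => x ∈ S i).FactorsThrough g) : (patch S a u).FactorsThrough g := by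
  intro x y hxy
  have hmem (i : ι) : x ∈ S i ↔ y ∈ S i := (hSg i hxy).to_iff
  by_cases h : ∃ i, x ∈ S i
  · obtain ⟨i, hi⟩ := h
    rw [patch_of_mem hS hi, patch_of_mem hS ((hmem i).1 hi)]
  · rw [not_exists] at h
    rw [patch_of_notMem h, patch_of_notMem fun i => (hmem i).not.1 (h i), hu hxy]

end Patch

section SquaredDistance

variable {ι X : Type*} {f u : X → ℝ}

/-- The squared `ℓ²` distance between two functions on a finite type. -/
def sqDist [Fintype X] (f u : X → ℝ) : ℝ :=
  ∑ x, (f x - u x) ^ 2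

theorem sqDist_nonneg [Fintype X] (f u : X → ℝ) : 0 ≤ sqDist f u :=
  sum_nonneg fun _ _ => sq_nonneg _

theorem sum_sq_sub_average_add {S : Finset X} {a : ℝ} (ha : ∑ x ∈ S, f x = a * #S) (d : ℝ) :
    ∑ x ∈ S, (f x - a) ^ 2 + #S * (a - d) ^ 2 = ∑ x ∈ S, (f x - d) ^ 2 := by
  have expand (c : ℝ) :
      ∑ x ∈ S, (f x - c) ^ 2 = ∑ x ∈ S, f x ^ 2 - 2 * c * ∑ x ∈ S, f x + #S * c ^ 2 := by
    simp only [sub_sq, sum_add_distrib, sum_sub_distrib, sum_const, nsmul_eq_mul, mul_sum]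
    congr 2
    exact sum_congr rfl fun x _ => by ring
  rw [expand, expand, ha]
  ring

theorem sqDist_patch_average_add [Fintype X] [Fintype ι] {S : ι → Finset X} {a d : ι → ℝ}
    (hS : Pairwise (Disjoint on S)) (ha : ∀ i, ∑ x ∈ S i, f x = a i * #(S i))
    (hd : ∀ i, ∀ x ∈ S i, u x = d i) :
    sqDist f (patch S a u) + ∑ i, #(S i) * (a i - d i) ^ 2 = sqDist f u := by
  classical
  have split (v : X → ℝ) : sqDist f v =
      ∑ i, ∑ x ∈ S i, (f x - v x) ^ 2 + ∑ x ∈ (univ.biUnion S)ᶜ, (f x - v x) ^ 2 := by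
    rw [sqDist, ← sum_add_sum_compl (univ.biUnion S), sum_biUnion fun i _ j _ hij => hS hij]
  have inside (i : ι) : ∑ x ∈ S i, (f x - patch S a u x) ^ 2 + #(S i) * (a i - d i) ^ 2 =
      ∑ x ∈ S i, (f x - u x) ^ 2 := by
    have hu : ∑ x ∈ S i, (f x - u x) ^ 2 = ∑ x ∈ S i, (f x - d i) ^ 2 :=
      sum_congr rfl fun x hx => by rw [hd i x hx]
    rw [hu, ← sum_sq_sub_average_add (ha i) (d i),
      sum_congr rfl fun x hx => by rw [patch_of_mem hS hx]]
  have outside : ∑ x ∈ (univ.biUnion S)ᶜ, (f x - patch S a u x) ^ 2 =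
      ∑ x ∈ (univ.biUnion S)ᶜ, (f x - u x) ^ 2 :=
    sum_congr rfl fun x hx => by rw [patch_of_notMem (by simpa using hx)]
  rw [split, split, outside, ← sum_congr rfl fun i _ => inside i, sum_add_distrib]
  ring

end SquaredDistance

section Packing

variable {V α ι : Type*} [Fintype V] [DecidableEq V]

theorem exists_monochromatic_packing [Fintype α] (L : V → α) {m : ℕ} (hm : 0 < m) :
    ∃ F : Finset (Finset V), (F : Set (Finset V)).PairwiseDisjoint id ∧ (∀ s ∈ F, #s = m) ∧
      (∀ s ∈ F, ∀ x ∈ s, ∀ y ∈ s, L x = L y) ∧ #(F.biUnion id)ᶜ ≤ Fintype.card α * m := by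
  classical
  obtain ⟨F, -, ⟨hdisj, hcard, hmono⟩, hmax⟩ := Finite.exists_le_maximal
    (p := fun F : Finset (Finset V) => (F : Set (Finset V)).PairwiseDisjoint id ∧
      (∀ s ∈ F, #s = m) ∧ ∀ s ∈ F, ∀ x ∈ s, ∀ y ∈ s, L x = L y) (a := ∅) (by simp)
  refine ⟨F, hdisj, hcard, hmono, ?_⟩
  by_contra! hlarge
  obtain ⟨c, -, hc⟩ := exists_lt_card_fiber_of_mul_lt_card_of_maps_to
    (t := univ) (f := L) (fun x _ => mem_univ _) hlarge
  obtain ⟨s, hs, hsm⟩ := exists_subset_card_eq hc.le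
  have hs_uncovered (s') (hs' : s' ∈ F) : Disjoint s s' :=
    (disjoint_compl_left.mono_right (subset_biUnion_of_mem id hs')).mono_left
      (hs.trans (filter_subset _ _))
  have hs_mono (x) (hx : x ∈ s) : L x = c := (mem_filter.1 (hs hx)).2
  have hsF : s ∈ F := by
    refine hmax ⟨?_, ?_, ?_⟩ (subset_insert s F) (mem_insert_self s F)
    · rw [coe_insert]
      exact hdisj.insert fun s' hs' _ => hs_uncovered s' hs'
    · exact forall_mem_insert _ _ _ |>.2 ⟨hsm, hcard⟩
    · exact forall_mem_insert _ _ _ |>.2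
        ⟨fun x hx y hy => (hs_mono x hx).trans (hs_mono y hy).symm, hmono⟩
  have hs_empty : s = ∅ := disjoint_self.1 (hs_uncovered s hsF)
  rw [hs_empty, card_empty] at hsm
  exact hm.ne hsm

theorem card_compl_biUnion_add [Fintype ι] {Vs : ι → Finset V} {m : ℕ}
    (hdisj : Pairwise (Disjoint on Vs)) (hcard : ∀ i, #(Vs i) = m) :
    #(univ.biUnion Vs)ᶜ + Fintype.card ι * m = Fintype.card V := by
  have hcover : #(univ.biUnion Vs) = Fintype.card ι * m := by
    rw [card_biUnion fun i _ j _ hij => hdisj hij, sum_congr rfl fun i _ => hcard i, sum_const,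
      card_univ, smul_eq_mul]
  rw [← hcover, card_compl_add_card]

theorem exists_monochromatic_family [Fintype α] (L : V → α) {m : ℕ} (hm : 0 < m) :
    ∃ (t : ℕ) (Vs : Fin t → Finset V), Pairwise (Disjoint on Vs) ∧ (∀ i, #(Vs i) = m) ∧
      (∀ i, ∀ x ∈ Vs i, ∀ y ∈ Vs i, L x = L y) ∧
      #(univ.biUnion Vs)ᶜ ≤ Fintype.card α * m := by
  obtain ⟨F, hdisj, hcard, hmono, hleft⟩ := exists_monochromatic_packing L hm
  let e := F.equivFin.symm
  have hunion : univ.biUnion (fun i => (e i : Finset V)) = F.biUnion id := by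
    ext x
    simpa using (e.surjective.exists (p := fun s => x ∈ (s : Finset V))).symm
  refine ⟨#F, fun i => e i, fun i j hij => ?_, fun i => hcard _ (e i).2, fun i => hmono _ (e i).2,
    hunion ▸ hleft⟩
  exact hdisj (e i).2 (e j).2 fun h => hij (e.injective (Subtype.ext h))

/-- The bound on the number of classes of a regular partition built from `N` colours. -/
noncomputable def classBound (ε : ℝ) (N : ℕ) : ℕ :=
  ⌈2 * N / ε⌉₊

theorem classBound_mono {ε : ℝ} (hε : 0 ≤ ε) : Monotone (classBound ε) :=
  fun _ _ h => Nat.ceil_mono (by gcongr)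

theorem exists_nat_mul_le_and_le_two_mul {N x : ℝ} (hN : 0 < N) (hx : 2 * N ≤ x) :
    ∃ m : ℕ, 0 < m ∧ N * m ≤ x ∧ x ≤ 2 * (N * m) := by
  have h_two : 2 ≤ x / N := (le_div_iff₀ hN).2 hx
  have h_le : (⌊x / N⌋₊ : ℝ) ≤ x / N := Nat.floor_le (by linarith)
  have h_lt : x / N < ⌊x / N⌋₊ + 1 := Nat.lt_floor_add_one _
  refine ⟨⌊x / N⌋₊, Nat.floor_pos.2 (by linarith), (le_div_iff₀' hN).1 h_le, ?_⟩
  have h_double : x / N ≤ 2 * ⌊x / N⌋₊ := by linarith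
  rw [div_le_iff₀' hN] at h_double
  linarith

theorem exists_equitable_monochromatic_family [Fintype α] (L : V → α) {N : ℕ} {ε : ℝ} (hN : 0 < N)
    (hαN : Fintype.card α ≤ N) (hε : 0 < ε) (hε_half : ε ≤ 1 / 2)
    (hV : classBound ε N ≤ Fintype.card V) :
    ∃ (t m : ℕ) (Vs : Fin t → Finset V), N ≤ t ∧ t ≤ classBound ε N ∧
      Pairwise (Disjoint on Vs) ∧ (∀ i, #(Vs i) = m) ∧ (∀ i, ∀ x ∈ Vs i, ∀ y ∈ Vs i, L x = L y) ∧
      (#(univ.biUnion Vs)ᶜ : ℝ) ≤ ε * Fintype.card V ∧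
      (Fintype.card V : ℝ) ≤ 2 * (t * m) := by
  set n : ℝ := (Fintype.card V : ℝ) with hn
  have hN' : (0 : ℝ) < N := by exact_mod_cast hN
  have hεn : 2 * N ≤ ε * n := by
    rw [← div_le_iff₀' hε]
    exact Nat.ceil_le.1 hV
  obtain ⟨m, hm, hm_le, hm_ge⟩ := exists_nat_mul_le_and_le_two_mul hN' hεn
  obtain ⟨t, Vs, hdisj, hcard, hmono, hleft⟩ := exists_monochromatic_family L hm
  have hm' : (0 : ℝ) < m := by exact_mod_cast hm
  have hsplit : (#(univ.biUnion Vs)ᶜ : ℝ) + t * m = n := by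
    have h := card_compl_biUnion_add hdisj hcard
    rw [Fintype.card_fin] at h
    rw [hn, ← h]
    push_cast
    rfl
  have hleft_Nm : (#(univ.biUnion Vs)ᶜ : ℝ) ≤ N * m := by
    exact_mod_cast hleft.trans (Nat.mul_le_mul_right m hαN)
  have hεn_half : ε * n ≤ n / 2 := by nlinarith
  have hN_le : (N : ℝ) ≤ t := le_of_mul_le_mul_right (by linarith) hm'
  have ht_le : t * ε ≤ 2 * N := by
    refine le_of_mul_le_mul_right ?_ hm'
    have : t * m * ε ≤ n * ε := by gcongr; linarith [Nat.cast_nonneg (α := ℝ) #(univ.biUnion Vs)ᶜ]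
    linarith
  refine ⟨t, m, Vs, by exact_mod_cast hN_le, ?_, hdisj, hcard, hmono, by linarith, by linarith⟩
  exact Nat.cast_le.1 (((le_div_iff₀ hε).2 ht_le).trans (Nat.le_ceil _))

end Packing

section Density

variable {V : Type} [DecidableEq V] {H : Finset (Finset V)}

/-- The indicator function of the ordered triples of vertices which form an edge of `H`. -/
def edgeIndicator (H : Finset (Finset V)) (x : V × V × V) : ℝ :=
  if {x.1, x.2.1, x.2.2} ∈ H then 1 else 0

theorem triple_inter {A B C : Finset V} (hAB : Disjoint A B) (hAC : Disjoint A C)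
    (hBC : Disjoint B C) {x y z : V} (hx : x ∈ A) (hy : y ∈ B) (hz : z ∈ C) :
    {x, y, z} ∩ A = {x} ∧ {x, y, z} ∩ B = {y} ∧ {x, y, z} ∩ C = {z} := by
  rw [disjoint_left] at hAB hAC hBC
  refine ⟨?_, ?_, ?_⟩ <;> grind

theorem eq_triple_of_card_inter_eq_one {A B C e : Finset V} (hAB : Disjoint A B)
    (hAC : Disjoint A C) (hBC : Disjoint B C) (he : #e = 3) (hA : #(e ∩ A) = 1)
    (hB : #(e ∩ B) = 1) (hC : #(e ∩ C) = 1) :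
    ∃ x ∈ A, ∃ y ∈ B, ∃ z ∈ C, {x, y, z} = e := by
  obtain ⟨x, hx⟩ := card_pos.1 (hA.symm ▸ one_pos)
  obtain ⟨y, hy⟩ := card_pos.1 (hB.symm ▸ one_pos)
  obtain ⟨z, hz⟩ := card_pos.1 (hC.symm ▸ one_pos)
  rw [mem_inter] at hx hy hz
  refine ⟨x, hx.2, y, hy.2, z, hz.2, eq_of_subset_of_card_le ?_ ?_⟩
  · simp [insert_subset_iff, hx.1, hy.1, hz.1]
  · rw [he, card_eq_three.2 ⟨x, y, z, disjoint_iff_ne.1 hAB x hx.2 y hy.2,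
      disjoint_iff_ne.1 hAC x hx.2 z hz.2, disjoint_iff_ne.1 hBC y hy.2 z hz.2, rfl⟩]

theorem eCross_eq_sum_edgeIndicator (hH : ∀ e ∈ H, #e = 3) {A B C : Finset V}
    (hAB : Disjoint A B) (hAC : Disjoint A C) (hBC : Disjoint B C) :
    (eCross H A B C : ℝ) = ∑ x ∈ A ×ˢ B ×ˢ C, edgeIndicator H x := by
  simp only [edgeIndicator]
  rw [sum_boole, Nat.cast_inj, eCross]
  symm
  apply card_nbij (fun x => {x.1, x.2.1, x.2.2})
  · rintro ⟨x, y, z⟩ h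
    simp only [coe_filter, mem_product, Set.mem_ofPred_eq] at h ⊢
    obtain ⟨⟨hx, hy, hz⟩, he⟩ := h
    obtain ⟨hA, hB, hC⟩ := triple_inter hAB hAC hBC hx hy hz
    simp only [he, hA, hB, hC, card_singleton, and_self]
  · rintro ⟨x, y, z⟩ h ⟨x', y', z'⟩ h' heq
    simp only [coe_filter, mem_product, Set.mem_ofPred_eq] at h h' heq
    obtain ⟨hA, hB, hC⟩ := triple_inter hAB hAC hBC h.1.1 h.1.2.1 h.1.2.2
    obtain ⟨hA', hB', hC'⟩ := triple_inter hAB hAC hBC h'.1.1 h'.1.2.1 h'.1.2.2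
    rw [heq] at hA hB hC
    rw [singleton_injective (hA.symm.trans hA'), singleton_injective (hB.symm.trans hB'),
      singleton_injective (hC.symm.trans hC')]
  · intro e he
    simp only [coe_filter, Set.mem_ofPred_eq] at he
    obtain ⟨heH, hA, hB, hC⟩ := he
    obtain ⟨x, hx, y, hy, z, hz, rfl⟩ :=
      eq_triple_of_card_inter_eq_one hAB hAC hBC (hH e heH) hA hB hC
    exact ⟨(x, y, z), by simp [hx, hy, hz, heH], rfl⟩

theorem triDensity_nonneg (H : Finset (Finset V)) (A B C : Finset V) : 0 ≤ triDensity H A B C := by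
  unfold triDensity
  positivity

theorem sum_edgeIndicator_eq_triDensity_mul_card (hH : ∀ e ∈ H, #e = 3) {A B C : Finset V}
    (hAB : Disjoint A B) (hAC : Disjoint A C) (hBC : Disjoint B C) :
    ∑ x ∈ A ×ˢ B ×ˢ C, edgeIndicator H x = triDensity H A B C * #(A ×ˢ B ×ˢ C) := by
  have hcard : (#(A ×ˢ B ×ˢ C) : ℝ) = #A * #B * #C := by simp only [card_product]; push_cast; ring
  have hempty : (#(A ×ˢ B ×ˢ C) : ℝ) = 0 → (eCross H A B C : ℝ) = 0 := by
    rw [Nat.cast_eq_zero, card_eq_zero, eCross_eq_sum_edgeIndicator hH hAB hAC hBC]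
    intro h
    rw [h, sum_empty]
  rw [triDensity, ← hcard, div_mul_cancel_of_imp hempty,
    eCross_eq_sum_edgeIndicator hH hAB hAC hBC]

end Density

section Regularity

variable {V : Type} [DecidableEq V] {H : Finset (Finset V)} {ε : ℝ} {t : ℕ}

theorem EpsRegTriple.mono {ε' : ℝ} (hε : ε' ≤ ε) {A B C : Finset V}
    (h : EpsRegTriple H ε' A B C) : EpsRegTriple H ε A B C := by
  obtain ⟨d, hd, hreg⟩ := h
  have large {X Y : Finset V} (hXY : ε * #X ≤ #Y) : ε' * #X ≤ #Y := le_trans (by gcongr) hXY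
  exact ⟨d, hd, fun A' B' C' hA hB hC cA cB cC =>
    (hreg A' B' C' hA hB hC (large cA) (large cB) (large cC)).trans hε⟩

theorem exists_box_of_not_epsRegTriple {A B C : Finset V} (hε : 0 ≤ ε)
    (h : ¬ EpsRegTriple H ε A B C) {d : ℝ} (hd : 0 ≤ d) :
    ∃ A' ⊆ A, ∃ B' ⊆ B, ∃ C' ⊆ C, ε ^ 3 * #(A ×ˢ B ×ˢ C) ≤ (#(A' ×ˢ B' ×ˢ C') : ℝ) ∧
      ε < |triDensity H A' B' C' - d| := by
  unfold EpsRegTriple RegTriple at h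
  push Not at h
  obtain ⟨A', B', C', hA, hB, hC, cA, cB, cC, hdev⟩ := h d hd
  refine ⟨A', hA, B', hB, C', hC, ?_, hdev⟩
  simp only [card_product, Nat.cast_mul]
  calc ε ^ 3 * (#A * (#B * #C)) = ε * #A * (ε * #B * (ε * #C)) := by ring
    _ ≤ #A' * (#B' * #C') := by gcongr

/-- The index triples `i < j < k` for which `(Vs i, Vs j, Vs k)` is not `ε`-regular in `H`. -/
def irregularTriples (H : Finset (Finset V)) (ε : ℝ) (Vs : Fin t → Finset V) :
    Set (Fin t × Fin t × Fin t) :=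
  {p | p.1 < p.2.1 ∧ p.2.1 < p.2.2 ∧ ¬ EpsRegTriple H ε (Vs p.1) (Vs p.2.1) (Vs p.2.2)}

theorem irregularTriples_subset {ε' : ℝ} (hε : ε' ≤ ε) (Vs : Fin t → Finset V) :
    irregularTriples H ε Vs ⊆ irregularTriples H ε' Vs :=
  fun _ hp => ⟨hp.1, hp.2.1, fun hreg => hp.2.2 (hreg.mono hε)⟩

/-- `H` has an `ε`-regular partition into an exceptional class `V0` of at most `ε * |V|` vertices
and between `t₀` and `T₀` further classes of equal size. -/
def HasRegularPartition [Fintype V] (H : Finset (Finset V)) (ε : ℝ) (t₀ T₀ : ℕ) : Prop :=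
  ∃ (t : ℕ) (V0 : Finset V) (Vs : Fin t → Finset V),
    t₀ ≤ t ∧ t ≤ T₀ ∧
    (∀ i, Disjoint V0 (Vs i)) ∧
    (∀ i j, i ≠ j → Disjoint (Vs i) (Vs j)) ∧
    V0 ∪ univ.biUnion Vs = univ ∧
    (∀ i j, #(Vs i) = #(Vs j)) ∧
    (#V0 : ℝ) ≤ ε * Fintype.card V ∧
    ((irregularTriples H ε Vs).ncard : ℝ) ≤ ε * t.choose 3

theorem HasRegularPartition.mono [Fintype V] {ε' : ℝ} {t₀ t₀' T₀ T₀' : ℕ}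
    (h : HasRegularPartition H ε' t₀' T₀') (hε : ε' ≤ ε) (ht : t₀ ≤ t₀') (hT : T₀' ≤ T₀) :
    HasRegularPartition H ε t₀ T₀ := by
  obtain ⟨t, V0, Vs, ht₀, hT₀, hV0, hdisj, hcover, hcard, hsmall, hreg⟩ := h
  refine ⟨t, V0, Vs, ht.trans ht₀, hT₀.trans hT, hV0, hdisj, hcover, hcard,
    hsmall.trans (by gcongr), ?_⟩
  calc ((irregularTriples H ε Vs).ncard : ℝ)
      ≤ (irregularTriples H ε' Vs).ncard := by
        exact_mod_cast Set.ncard_le_ncard (irregularTriples_subset hε Vs) (Set.toFinite _)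
    _ ≤ ε' * t.choose 3 := hreg
    _ ≤ ε * t.choose 3 := by gcongr

end Regularity

section Refinement

variable {V α ι : Type*}

/-- The colouring which records, besides the colour `L x`, which of the sets `A i`, `B i` and `C i`
contain the vertex `x`. -/
def refineColouring [DecidableEq V] (L : V → α) (A B C : ι → Finset V) (x : V) :
    α × (ι → Bool × Bool × Bool) :=
  (L x, fun i => (decide (x ∈ A i), decide (x ∈ B i), decide (x ∈ C i)))

theorem factorsThrough_refineColouring [DecidableEq V] {β : Type*} {L : V → α}
    {u : V × V × V → β} (hu : u.FactorsThrough (Prod.map L (Prod.map L L)))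
    (A B C : ι → Finset V) :
    u.FactorsThrough (Prod.map (refineColouring L A B C)
      (Prod.map (refineColouring L A B C) (refineColouring L A B C))) := by
  intro x y hxy
  simp only [Prod.map, refineColouring, Prod.mk.injEq] at hxy
  exact hu (by simp only [Prod.map, hxy.1.1, hxy.2.1.1, hxy.2.2.1])

theorem mem_box_factorsThrough_refineColouring [DecidableEq V] (L : V → α) (A B C : ι → Finset V)
    (i : ι) :
    (fun x => x ∈ A i ×ˢ B i ×ˢ C i).FactorsThrough (Prod.map (refineColouring L A B C)
      (Prod.map (refineColouring L A B C) (refineColouring L A B C))) := by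
  intro x y hxy
  simp only [Prod.map, refineColouring, Prod.mk.injEq, funext_iff, decide_eq_decide] at hxy
  simp only [mem_product, (hxy.1.2 i).1, (hxy.2.1.2 i).2.1, (hxy.2.2.2 i).2.2]

theorem exists_nonneg_eq_const_on_box {L : V → α} {u : V × V × V → ℝ} (hu : ∀ x, 0 ≤ u x)
    (hL : u.FactorsThrough (Prod.map L (Prod.map L L))) {A B C : Finset V}
    (hA : ∀ x ∈ A, ∀ y ∈ A, L x = L y) (hB : ∀ x ∈ B, ∀ y ∈ B, L x = L y)
    (hC : ∀ x ∈ C, ∀ y ∈ C, L x = L y) : ∃ d, 0 ≤ d ∧ ∀ x ∈ A ×ˢ B ×ˢ C, u x = d := by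
  obtain hempty | ⟨y, hy⟩ := (A ×ˢ B ×ˢ C).eq_empty_or_nonempty
  · exact ⟨0, le_rfl, by simp [hempty]⟩
  · refine ⟨u y, hu y, fun x hx => hL ?_⟩
    simp only [mem_product] at hx hy
    simp only [Prod.map, hA _ hx.1 _ hy.1, hB _ hx.2.1 _ hy.2.1, hC _ hx.2.2 _ hy.2.2]

theorem pairwise_disjoint_box {Vs : ι → Finset V} (h : Pairwise (Disjoint on Vs)) :
    Pairwise (Disjoint on fun p : ι × ι × ι => Vs p.1 ×ˢ Vs p.2.1 ×ˢ Vs p.2.2) := by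
  intro p q hpq
  simp only [Function.onFun, disjoint_product]
  contrapose! hpq
  exact Prod.ext (h.eq hpq.1) (Prod.ext (h.eq hpq.2.1) (h.eq hpq.2.2))

end Refinement

section Decrement

variable {V : Type} [Fintype V] [DecidableEq V] {H : Finset (Finset V)} {ε : ℝ}

/-- The edge indicator of `H` is within squared distance `E` of a nonnegative function which depends
only on the colours of the three vertices, for some colouring of `V` with at most `N` colours. -/
def HasStepApproximation (H : Finset (Finset V)) (N : ℕ) (E : ℝ) : Prop :=
  ∃ (α : Type) (_ : Fintype α) (L : V → α) (u : V × V × V → ℝ), Fintype.card α ≤ N ∧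
    (∀ x, 0 ≤ u x) ∧ u.FactorsThrough (Prod.map L (Prod.map L L)) ∧
    sqDist (edgeIndicator H) u ≤ E

theorem HasStepApproximation.mono {N N' : ℕ} {E E' : ℝ} (h : HasStepApproximation H N E)
    (hN : N ≤ N') (hE : E ≤ E') : HasStepApproximation H N' E' := by
  obtain ⟨α, hα, L, u, hαN, hu, hL, hdist⟩ := h
  exact ⟨α, hα, L, u, hαN.trans hN, hu, hL, hdist.trans hE⟩

theorem hasStepApproximation_one (H : Finset (Finset V)) :
    HasStepApproximation H 1 ((Fintype.card V : ℝ) ^ 3) := by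
  refine ⟨Unit, inferInstance, fun _ => (), fun _ => 0, by simp, fun _ => le_rfl,
    fun _ _ _ => rfl, ?_⟩
  calc sqDist (edgeIndicator H) (fun _ => 0)
      ≤ ∑ _x : V × V × V, (1 : ℝ) := by
        refine sum_le_sum fun x _ => ?_
        unfold edgeIndicator
        split_ifs <;> norm_num
    _ = (Fintype.card V : ℝ) ^ 3 := by
        simp only [sum_const, card_univ, Fintype.card_prod, nsmul_eq_mul, Nat.cast_mul, mul_one]
        ring

theorem hasStepApproximation_patch {α ι : Type} [Fintype α] [Fintype ι] {L : V → α}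
    {u : V × V × V → ℝ} (hu : ∀ x, 0 ≤ u x) (hL : u.FactorsThrough (Prod.map L (Prod.map L L)))
    {A B C : ι → Finset V} (hdisj : Pairwise (Disjoint on fun i => A i ×ˢ B i ×ˢ C i)) {a : ι → ℝ}
    (ha : ∀ i, 0 ≤ a i) :
    HasStepApproximation H (Fintype.card α * 8 ^ Fintype.card ι)
      (sqDist (edgeIndicator H) (patch (fun i => A i ×ˢ B i ×ˢ C i) a u)) := by
  classical
  refine ⟨_, inferInstance, refineColouring L A B C, _, ?_, patch_nonneg ha hu,
    factorsThrough_patch hdisj (factorsThrough_refineColouring hL A B C)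
      (mem_box_factorsThrough_refineColouring L A B C), le_rfl⟩
  simp

theorem hasStepApproximation_of_deviating_boxes (hH : ∀ e ∈ H, #e = 3) (hε : 0 ≤ ε)
    {α ι : Type} [Fintype α] [Fintype ι] {L : V → α} {u : V × V × V → ℝ} (hu : ∀ x, 0 ≤ u x)
    (hL : u.FactorsThrough (Prod.map L (Prod.map L L))) {A B C : ι → Finset V} {d : ι → ℝ} {K : ℝ}
    (hAB : ∀ i, Disjoint (A i) (B i)) (hAC : ∀ i, Disjoint (A i) (C i))
    (hBC : ∀ i, Disjoint (B i) (C i)) (hdisj : Pairwise (Disjoint on fun i => A i ×ˢ B i ×ˢ C i))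
    (hud : ∀ i, ∀ x ∈ A i ×ˢ B i ×ˢ C i, u x = d i) (hK : ∀ i, K ≤ #(A i ×ˢ B i ×ˢ C i))
    (hdev : ∀ i, ε ≤ |triDensity H (A i) (B i) (C i) - d i|) :
    HasStepApproximation H (Fintype.card α * 8 ^ Fintype.card ι)
      (sqDist (edgeIndicator H) u - Fintype.card ι * (K * ε ^ 2)) := by
  let a := fun i => triDensity H (A i) (B i) (C i)
  have ha (i : ι) : 0 ≤ a i := triDensity_nonneg H _ _ _
  have havg (i : ι) := sum_edgeIndicator_eq_triDensity_mul_card hH (hAB i) (hAC i) (hBC i)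
  have hdrop (i : ι) : K * ε ^ 2 ≤ #(A i ×ˢ B i ×ˢ C i) * (a i - d i) ^ 2 := by
    rw [← sq_abs (a i - d i)]
    gcongr
    exacts [hK i, hdev i]
  refine (hasStepApproximation_patch hu hL hdisj ha).mono le_rfl ?_
  rw [← sqDist_patch_average_add hdisj havg hud, le_sub_iff_add_le, ← nsmul_eq_mul]
  gcongr
  exact card_nsmul_le_sum _ _ _ fun i _ => hdrop i

theorem hasStepApproximation_of_irregularTriples (hH : ∀ e ∈ H, #e = 3) (hε : 0 ≤ ε) {α : Type}
    [Fintype α] {L : V → α} {u : V × V × V → ℝ} (hu : ∀ x, 0 ≤ u x)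
    (hL : u.FactorsThrough (Prod.map L (Prod.map L L))) {t m : ℕ} {Vs : Fin t → Finset V}
    (hdisj : Pairwise (Disjoint on Vs)) (hcard : ∀ i, #(Vs i) = m)
    (hmono : ∀ i, ∀ x ∈ Vs i, ∀ y ∈ Vs i, L x = L y) :
    HasStepApproximation H (Fintype.card α * 8 ^ t ^ 3)
      (sqDist (edgeIndicator H) u - (irregularTriples H ε Vs).ncard * (ε ^ 5 * m ^ 3)) := by
  classical
  have hconst (p : irregularTriples H ε Vs) := exists_nonneg_eq_const_on_box hu hL
    (hmono p.1.1) (hmono p.1.2.1) (hmono p.1.2.2)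
  choose d hd hud using hconst
  have hbox (p : irregularTriples H ε Vs) := exists_box_of_not_epsRegTriple hε p.2.2.2 (hd p)
  choose A hA B hB C hC hlarge hdev using hbox
  have hsub (p) : A p ×ˢ B p ×ˢ C p ⊆ Vs p.1.1 ×ˢ Vs p.1.2.1 ×ˢ Vs p.1.2.2 :=
    product_subset_product (hA p) (product_subset_product (hB p) (hC p))
  have hvolume (p) : ε ^ 3 * m ^ 3 ≤ #(A p ×ˢ B p ×ˢ C p) := by
    refine le_trans (le_of_eq ?_) (hlarge p)
    simp only [card_product, hcard]
    push_cast
    ring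
  have hcount : Fintype.card (irregularTriples H ε Vs) ≤ t ^ 3 := by
    refine (Fintype.card_subtype_le _).trans (le_of_eq ?_)
    simp only [Fintype.card_prod, Fintype.card_fin]
    ring
  refine (hasStepApproximation_of_deviating_boxes hH hε hu hL
    (fun p => (hdisj p.2.1.ne).mono (hA p) (hB p))
    (fun p => (hdisj (p.2.1.trans p.2.2.1).ne).mono (hA p) (hC p))
    (fun p => (hdisj p.2.2.1.ne).mono (hB p) (hC p))
    (fun p q hpq => (pairwise_disjoint_box hdisj (Subtype.coe_ne_coe.2 hpq)).mono (hsub p) (hsub q))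
    (fun p x hx => hud p x (hsub p hx)) hvolume (fun p => (hdev p).le)).mono
    (by gcongr; norm_num) (le_of_eq ?_)
  rw [← Nat.card_coe_set_eq, Nat.card_eq_fintype_card]
  ring

theorem cube_div_le_choose_three {t : ℕ} (ht : 3 ≤ t) : (t : ℝ) ^ 3 / 162 ≤ t.choose 3 := by
  have hbase : (t : ℝ) / 3 ≤ (t + 1 - 3 : ℕ) := by
    rw [Nat.cast_sub (by lia)]
    have : (3 : ℝ) ≤ t := by exact_mod_cast ht
    push_cast
    linarith
  calc (t : ℝ) ^ 3 / 162 = (t / 3 : ℝ) ^ 3 / (Nat.factorial 3 : ℕ) := by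
        norm_num [Nat.factorial]
        ring
    _ ≤ ((t + 1 - 3 : ℕ) : ℝ) ^ 3 / (Nat.factorial 3 : ℕ) := by gcongr
    _ ≤ t.choose 3 := Nat.pow_le_choose 3 t

theorem irregular_drop_bound {t m : ℕ} {n I : ℝ} (ht : 3 ≤ t) (hε : 0 ≤ ε) (hn : 0 ≤ n)
    (hntm : n ≤ 2 * (t * m)) (hI : ε * t.choose 3 ≤ I) :
    ε ^ 6 / 1296 * n ^ 3 ≤ I * (ε ^ 5 * m ^ 3) :=
  calc ε ^ 6 / 1296 * n ^ 3 ≤ ε ^ 6 / 1296 * (2 * (t * m)) ^ 3 := by gcongr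
    _ = ε * (t ^ 3 / 162) * (ε ^ 5 * m ^ 3) := by ring
    _ ≤ ε * t.choose 3 * (ε ^ 5 * m ^ 3) := by gcongr; exact cube_div_le_choose_three ht
    _ ≤ I * (ε ^ 5 * m ^ 3) := by gcongr

/-- The bound on the number of colours after one refinement of a colouring with `N` colours. -/
noncomputable def refinedColourBound (ε : ℝ) (N : ℕ) : ℕ :=
  N * 8 ^ classBound ε N ^ 3

theorem le_refinedColourBound (ε : ℝ) (N : ℕ) : N ≤ refinedColourBound ε N :=
  Nat.le_mul_of_pos_right _ (by positivity)

theorem hasRegularPartition_or_hasStepApproximation (hH : ∀ e ∈ H, #e = 3) (hε : 0 < ε)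
    (hε_half : ε ≤ 1 / 2) {N : ℕ} (hN : 3 ≤ N) (hV : classBound ε N ≤ Fintype.card V) {E : ℝ}
    (h : HasStepApproximation H N E) :
    HasRegularPartition H ε N (classBound ε N) ∨ HasStepApproximation H (refinedColourBound ε N)
      (E - ε ^ 6 / 1296 * (Fintype.card V : ℝ) ^ 3) := by
  obtain ⟨α, hα, L, u, hαN, hu, hL, hE⟩ := h
  obtain ⟨t, m, Vs, hNt, htN, hdisj, hcard, hmono, hleft, hntm⟩ :=
    exists_equitable_monochromatic_family L (by lia) hαN hε hε_half hV
  by_cases hreg : ((irregularTriples H ε Vs).ncard : ℝ) ≤ ε * t.choose 3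
  · refine .inl ⟨t, (univ.biUnion Vs)ᶜ, Vs, hNt, htN, fun i => ?_, fun i j hij => hdisj hij, ?_,
      fun i j => (hcard i).trans (hcard j).symm, hleft, hreg⟩
    · exact disjoint_compl_left.mono_right (subset_biUnion_of_mem Vs (mem_univ i))
    · rw [union_comm, union_compl]
  · have hdrop := irregular_drop_bound (hN.trans hNt) hε.le (Nat.cast_nonneg _) hntm
      (not_le.1 hreg).le
    refine .inr ((hasStepApproximation_of_irregularTriples hH hε.le hu hL hdisj hcard hmono).mono
      ?_ (by linarith))
    exact Nat.mul_le_mul hαN (Nat.pow_le_pow_right (by norm_num) (Nat.pow_le_pow_left htN 3))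

theorem hasRegularPartition_of_hasStepApproximation (hH : ∀ e ∈ H, #e = 3) (hε : 0 < ε)
    (hε_half : ε ≤ 1 / 2) (k : ℕ) {N : ℕ} (hN : 3 ≤ N)
    (hV : classBound ε ((refinedColourBound ε)^[k] N) ≤ Fintype.card V) {E : ℝ}
    (hE : E < k * (ε ^ 6 / 1296 * (Fintype.card V : ℝ) ^ 3)) (h : HasStepApproximation H N E) :
    HasRegularPartition H ε N (classBound ε ((refinedColourBound ε)^[k] N)) := by
  induction k generalizing N E with
  | zero =>
    obtain ⟨α, -, L, u, -, -, -, hdist⟩ := h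
    have := sqDist_nonneg (edgeIndicator H) u
    rw [Nat.cast_zero, zero_mul] at hE
    linarith
  | succ k ih =>
    have hN_le : N ≤ (refinedColourBound ε)^[k + 1] N :=
      Function.id_le_iterate_of_id_le (le_refinedColourBound ε) (k + 1) N
    have hbound := classBound_mono hε.le hN_le
    obtain hpart | happrox := hasRegularPartition_or_hasStepApproximation hH hε hε_half hN
      (hbound.trans hV) h
    · exact hpart.mono le_rfl le_rfl hbound
    · have hNs := le_refinedColourBound ε N
      rw [Function.iterate_succ_apply] at hV ⊢
      push_cast at hE
      exact (ih (hN.trans hNs) hV (by linarith) happrox).mono le_rfl hNs le_rfl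

end Decrement

theorem weak_hypergraph_regularity (t₀ : ℕ) (ε : ℝ) (hε : 0 < ε) :
    ∃ T₀ n₀ : ℕ, ∀ (V : Type) [Fintype V] [DecidableEq V], ∀ (H : Finset (Finset V)) (n : ℕ),
      Fintype.card V = n → n₀ ≤ n →
      (∀ e ∈ H, e.card = 3) →
      ∃ (t : ℕ) (V0 : Finset V) (Vs : Fin t → Finset V),
        t₀ ≤ t ∧ t ≤ T₀ ∧
        (∀ i, Disjoint V0 (Vs i)) ∧
        (∀ i j, i ≠ j → Disjoint (Vs i) (Vs j)) ∧
        (V0 ∪ Finset.univ.biUnion Vs = Finset.univ) ∧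
        (∀ i j, (Vs i).card = (Vs j).card) ∧
        ((V0.card : ℝ) ≤ ε * n) ∧
        ((({p : Fin t × Fin t × Fin t | p.1 < p.2.1 ∧ p.2.1 < p.2.2 ∧
            ¬ EpsRegTriple H ε (Vs p.1) (Vs p.2.1) (Vs p.2.2)}).ncard : ℝ)
          ≤ ε * (t.choose 3 : ℝ)) := by
  set ε' := min ε (1 / 2)
  have hε' : 0 < ε' := lt_min hε one_half_pos
  obtain ⟨k, hk⟩ := exists_nat_gt (1 / (ε' ^ 6 / 1296))
  rw [div_lt_iff₀ (by positivity)] at hk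
  let T₀ := classBound ε' ((refinedColourBound ε')^[k] (max t₀ 3))
  refine ⟨T₀, T₀ + 1, ?_⟩
  rintro V _ _ H _ rfl hn hH
  have hV : (0 : ℝ) < Fintype.card V := by exact_mod_cast (Nat.succ_pos T₀).trans_le hn
  have hstart : HasStepApproximation H (max t₀ 3) ((Fintype.card V : ℝ) ^ 3) :=
    (hasStepApproximation_one H).mono (by lia) le_rfl
  have hpart : HasRegularPartition H ε' (max t₀ 3) T₀ :=
    hasRegularPartition_of_hasStepApproximation hH hε' (min_le_right _ _) k (le_max_right _ _)
      (Nat.le_of_succ_le hn) (by nlinarith [pow_pos hV 3]) hstart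
  exact hpart.mono (min_le_left _ _) (le_max_left _ _) le_rfl
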